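/- Let ℬ := {B ∈ F : E_μ̄[1_B] > 0 and E_{λQ_α^c}[1_B] = 0} and let β := sup_{B ∈ ℬ} E_μ̄[1_B], with β := 0 if ℬ is empty. Then there exists X_α^0 ∈ 𝒳 with 0 ≤ X_α^0 ≤ 1, E_μ[X_α^0] < α and E_{λQ_α^c}[X_α^0] = γ_α^c if and only if β > 1 − α. -/

import Mathlib

open MeasureTheory Filter Topology
open scoped ENNReal

/-- `X` belongs to the space `𝒳` of bounded measurable real-valued functions on `Ω`. -/
def MemX {Ω : Type*} [MeasurableSpace Ω] (X : Ω → ℝ) : Prop :=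
  Measurable X ∧ ∃ M : ℝ, ∀ ω, |X ω| ≤ M

/-- A sublinear operator on `𝒳`: monotone, constant preserving, subadditive and
positively homogeneous. -/
def IsSublinearOp {Ω : Type*} [MeasurableSpace Ω] (ρ : (Ω → ℝ) → ℝ) : Prop :=
  (∀ X Y : Ω → ℝ, MemX X → MemX Y → (∀ ω, Y ω ≤ X ω) → ρ Y ≤ ρ X) ∧
  (∀ c : ℝ, ρ (fun _ => c) = c) ∧
  (∀ X Y : Ω → ℝ, MemX X → MemX Y → ρ (X + Y) ≤ ρ X + ρ Y) ∧
  (∀ c : ℝ, 0 ≤ c → ∀ X : Ω → ℝ, MemX X → ρ (c • X) = c * ρ X)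

/-- A linear functional on `𝒳`. -/
def IsLinearOp {Ω : Type*} [MeasurableSpace Ω] (L : (Ω → ℝ) → ℝ) : Prop :=
  (∀ X Y : Ω → ℝ, MemX X → MemX Y → L (X + Y) = L X + L Y) ∧
  (∀ (c : ℝ) (X : Ω → ℝ), MemX X → L (c • X) = c * L X)

/-- `L` is dominated by `ρ` on `𝒳`. -/
def Dominated {Ω : Type*} [MeasurableSpace Ω] (L ρ : (Ω → ℝ) → ℝ) : Prop :=
  ∀ X : Ω → ℝ, MemX X → L X ≤ ρ X

/-- The conjugate operator `E_ῡ[X] := -E_υ[-X]`. -/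
def conjOp {Ω : Type*} (ρ : (Ω → ℝ) → ℝ) : (Ω → ℝ) → ℝ := fun X => -ρ (-X)

/-- The set `𝒳_α` of test functions at significance level `α`. -/
def testSet {Ω : Type*} [MeasurableSpace Ω] (Emu : (Ω → ℝ) → ℝ) (α : ℝ) : Set (Ω → ℝ) :=
  {X | MemX X ∧ (∀ ω, 0 ≤ X ω ∧ X ω ≤ 1) ∧ Emu X ≤ α}

/-- A positive normalized linear functional `Qp` is *pure additive* if there is a
sequence of measurable sets `A n ↓ ∅` with `Qp(1_{A n}) → 1`. -/
def PureAdditive {Ω : Type*} [MeasurableSpace Ω] (Qp : (Ω → ℝ) → ℝ) : Prop :=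
  ∃ A : ℕ → Set Ω, (∀ n, MeasurableSet (A n)) ∧ Antitone A ∧ (⋂ n, A n) = ∅ ∧
    Tendsto (fun n => Qp ((A n).indicator fun _ => (1 : ℝ))) atTop (𝓝 1)

/-- Hypothesis (H1): for every sequence of measurable sets `A n ↓ ∅` such that
`lim E_υ[1_{A n}]` exists and is nonzero, one has `lim E_μ[1_{A n}] = 0`. -/
def HypH1 {Ω : Type*} [MeasurableSpace Ω] (Emu Eups : (Ω → ℝ) → ℝ) : Prop :=
  ∀ A : ℕ → Set Ω, (∀ n, MeasurableSet (A n)) → Antitone A → (⋂ n, A n) = ∅ →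
    ∀ l : ℝ, Tendsto (fun n => Eups ((A n).indicator fun _ => (1 : ℝ))) atTop (𝓝 l) →
      l ≠ 0 →
      Tendsto (fun n => Emu ((A n).indicator fun _ => (1 : ℝ))) atTop (𝓝 0)

/-- Hypothesis (H2): for every `X ∈ 𝒳_α` with `E_μ[X] > 0` and every positive
integer `K`, `E_μ[X] > E_μ[(X - 1/K)⁺]`. -/
def HypH2 {Ω : Type*} [MeasurableSpace Ω] (Emu : (Ω → ℝ) → ℝ) (α : ℝ) : Prop :=
  ∀ X ∈ testSet Emu α, 0 < Emu X → ∀ K : ℕ, 0 < K →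
    Emu (fun ω => max (X ω - 1 / (K : ℝ)) 0) < Emu X

/-- Hypothesis (H3): for every sequence of measurable sets `A n ↓ ∅`,
`lim E_μ[1_{A n}] < 1` and `lim E_υ[1_{A n}] < 1`. -/
def HypH3 {Ω : Type*} [MeasurableSpace Ω] (Emu Eups : (Ω → ℝ) → ℝ) : Prop :=
  ∀ A : ℕ → Set Ω, (∀ n, MeasurableSet (A n)) → Antitone A → (⋂ n, A n) = ∅ →
    (∀ l : ℝ, Tendsto (fun n => Emu ((A n).indicator fun _ => (1 : ℝ))) atTop (𝓝 l) →
      l < 1) ∧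
    (∀ l : ℝ, Tendsto (fun n => Eups ((A n).indicator fun _ => (1 : ℝ))) atTop (𝓝 l) →
      l < 1)

theorem aux_memX {Ω : Type*} [MeasurableSpace Ω] {X : Ω → ℝ} (hX : Measurable X) (M : ℝ)
    (h : ∀ ω, |X ω| ≤ M) : MemX X := ⟨hX, M, h⟩

theorem aux_memX_const {Ω : Type*} [MeasurableSpace Ω] (c : ℝ) : MemX (fun _ : Ω => c) :=
  ⟨measurable_const, |c|, fun _ => le_rfl⟩

theorem aux_memX_ind {Ω : Type*} [MeasurableSpace Ω] {B : Set Ω} (hB : MeasurableSet B) :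
    MemX (B.indicator fun _ => (1 : ℝ)) := by
  refine ⟨measurable_const.indicator hB, 1, fun ω => ?_⟩
  by_cases h : ω ∈ B <;> simp [h]

theorem aux_memX_neg {Ω : Type*} [MeasurableSpace Ω] {X : Ω → ℝ} (hX : MemX X) : MemX (-X) := by
  obtain ⟨h, M, hM⟩ := hX
  exact ⟨h.neg, M, fun ω => by simpa using hM ω⟩

theorem aux_memX_smul {Ω : Type*} [MeasurableSpace Ω] {X : Ω → ℝ} (c : ℝ) (hX : MemX X) :
    MemX (c • X) := by
  obtain ⟨h, M, hM⟩ := hX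
  refine ⟨h.const_smul c, |c| * M, fun ω => ?_⟩
  simp only [Pi.smul_apply, smul_eq_mul, abs_mul]
  exact mul_le_mul_of_nonneg_left (hM ω) (abs_nonneg c)

theorem aux_memX_add {Ω : Type*} [MeasurableSpace Ω] {X Y : Ω → ℝ} (hX : MemX X) (hY : MemX Y) :
    MemX (X + Y) := by
  obtain ⟨h, M, hM⟩ := hX
  obtain ⟨h', M', hM'⟩ := hY
  exact ⟨h.add h', M + M', fun ω => (abs_add_le _ _).trans (add_le_add (hM ω) (hM' ω))⟩

theorem aux_integrable {Ω : Type*} [MeasurableSpace Ω] {Qc : Measure Ω} [IsProbabilityMeasure Qc]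
    {X : Ω → ℝ} (hX : MemX X) : Integrable X Qc := by
  obtain ⟨h, M, hM⟩ := hX
  exact Integrable.of_bound h.aestronglyMeasurable M (Eventually.of_forall hM)

/-- Theorem 4.3: with `ℬ = {B ∈ F : E_μ̄[1_B] > 0, E_{λQ_α^c}[1_B] = 0}` and
`β = sup_{B ∈ ℬ} E_μ̄[1_B]` (`β = 0` if `ℬ = ∅`), there exists `X_α^0 ∈ 𝒳`,
`0 ≤ X_α^0 ≤ 1`, with `E_μ[X_α^0] < α` and `E_{λQ_α^c}[X_α^0] = γ_α^c`
if and only if `β > 1 - α`. -/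
theorem slack_optimal_iff_beta {Ω : Type*} [MeasurableSpace Ω]
    (Emu Eups : (Ω → ℝ) → ℝ)
    (hEmu : IsSublinearOp Emu) (hEups : IsSublinearOp Eups)
    (α : ℝ) (hα0 : 0 < α) (hα1 : α < 1)
    (lam : ℝ) (hlam0 : 0 ≤ lam) (hlam1 : lam ≤ 1)
    (Qc : Measure Ω) (hQc : IsProbabilityMeasure Qc)
    (Qp : (Ω → ℝ) → ℝ) (hQplin : IsLinearOp Qp)
    (hQppos : ∀ X : Ω → ℝ, MemX X → (∀ ω, 0 ≤ X ω) → 0 ≤ Qp X)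
    (hQpone : Qp (fun _ => 1) = 1) (hQppure : PureAdditive Qp)
    (Qa : (Ω → ℝ) → ℝ) (hQalin : IsLinearOp Qa) (hQadom : Dominated Qa Eups)
    (hQasup : sSup (Qa '' testSet Emu α) = sSup (conjOp Eups '' testSet Emu α))
    (hQadec : ∀ X : Ω → ℝ, MemX X → Qa X = lam * ∫ ω, X ω ∂Qc + (1 - lam) * Qp X)
    (γ : ℝ) (hγ : γ = sSup ((fun X : Ω → ℝ => lam * ∫ ω, X ω ∂Qc) '' testSet Emu α))
    (β : ℝ)
    (hβ : β = sSup {r : ℝ | ∃ B : Set Ω, MeasurableSet B ∧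
        0 < conjOp Emu (B.indicator fun _ => (1 : ℝ)) ∧
        lam * ∫ ω, (B.indicator fun _ => (1 : ℝ)) ω ∂Qc = 0 ∧
        r = conjOp Emu (B.indicator fun _ => (1 : ℝ))}) :
    (∃ Xa0 : Ω → ℝ, MemX Xa0 ∧ (∀ ω, 0 ≤ Xa0 ω ∧ Xa0 ω ≤ 1) ∧
        Emu Xa0 < α ∧ lam * ∫ ω, Xa0 ω ∂Qc = γ) ↔ 1 - α < β := by
  obtain ⟨hmono, hconst, hsub, hhom⟩ := hEmu
  have hint : ∀ X : Ω → ℝ, MemX X → (∀ ω, 0 ≤ X ω ∧ X ω ≤ 1) → lam * ∫ ω, X ω ∂Qc ≤ lam := by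
    intro X hX h01
    have h1 : ∫ ω, X ω ∂Qc ≤ ∫ _, (1 : ℝ) ∂Qc :=
      integral_mono (aux_integrable hX) (integrable_const _) (fun ω => (h01 ω).2)
    simp only [integral_const, probReal_univ, smul_eq_mul, mul_one] at h1
    nlinarith
  have hbdd : BddAbove ((fun X : Ω → ℝ => lam * ∫ ω, X ω ∂Qc) '' testSet Emu α) := by
    refine ⟨lam, ?_⟩
    rintro _ ⟨X, ⟨hX, h01, -⟩, rfl⟩
    exact hint X hX h01
  have hle : ∀ X ∈ testSet Emu α, lam * ∫ ω, X ω ∂Qc ≤ γ := by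
    intro X hX
    rw [hγ]
    exact le_csSup hbdd ⟨X, hX, rfl⟩
  have hneg1 : Emu (-(fun _ : Ω => (1 : ℝ))) = -1 := hconst (-1)
  constructor
  · rintro ⟨X, hX, h01, hlt, hopt⟩
    -- the mixture of X with the constant 1
    obtain ⟨ε, hε0, hε1, hε⟩ : ∃ ε : ℝ, 0 < ε ∧ ε ≤ 1 ∧ Emu X + ε ≤ α := by
      refine ⟨min 1 (α - Emu X), lt_min one_pos (by linarith), min_le_left _ _, ?_⟩
      linarith [min_le_right 1 (α - Emu X)]
    have hE0 : 0 ≤ Emu X := by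
      have := hmono X (fun _ => 0) hX (aux_memX_const 0) (fun ω => (h01 ω).1)
      rwa [hconst] at this
    have hY1 : MemX ((1 - ε) • X) := aux_memX_smul _ hX
    have hY : MemX ((1 - ε) • X + fun _ => ε) := aux_memX_add hY1 (aux_memX_const ε)
    have hYt : ((1 - ε) • X + fun _ => ε) ∈ testSet Emu α := by
      refine ⟨hY, fun ω => ?_, ?_⟩
      · obtain ⟨a, b⟩ := h01 ω
        simp only [Pi.add_apply, Pi.smul_apply, smul_eq_mul]
        constructor <;> nlinarith
      · have h1 := hsub _ _ hY1 (aux_memX_const ε)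
        rw [hhom _ (by linarith) X hX, hconst] at h1
        nlinarith
    have h2 := hle _ hYt
    have h3 : ∫ ω, ((1 - ε) • X + (fun _ => ε : Ω → ℝ)) ω ∂Qc = (1 - ε) * ∫ ω, X ω ∂Qc + ε := by
      simp only [Pi.add_apply, Pi.smul_apply, smul_eq_mul]
      rw [integral_add ((aux_integrable hX).const_mul _) (integrable_const _),
        integral_const_mul]
      simp
    rw [h3] at h2
    have h4 : lam ≤ γ := by
      have : ε * (lam - γ) ≤ 0 := by nlinarith
      by_contra hc
      push Not at hc
      nlinarith [mul_pos hε0 (sub_pos.2 hc)]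
    have hB : MeasurableSet {ω | X ω < 1} := measurableSet_lt hX.1 measurable_const
    have hconj : 1 - α < conjOp Emu ({ω | X ω < 1}.indicator fun _ => (1 : ℝ)) := by
      have h5 : Emu (-({ω | X ω < 1}.indicator fun _ => (1 : ℝ))) ≤
          Emu (X + fun _ => (-1 : ℝ)) := by
        refine hmono _ _ (aux_memX_add hX (aux_memX_const _)) (aux_memX_neg (aux_memX_ind hB))
          (fun ω => ?_)
        obtain ⟨a, b⟩ := h01 ω
        by_cases h : X ω < 1
        · simp [h, a]
        · simp [h]
          linarith
      have h6 := hsub _ _ hX (aux_memX_const (-1))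
      rw [hconst] at h6
      simp only [conjOp]
      linarith
    refine hconj.trans_le ?_
    rw [hβ]
    refine le_csSup ⟨1, ?_⟩ ⟨_, hB, by linarith, ?_, rfl⟩
    · rintro _ ⟨B, hB', -, -, rfl⟩
      have := hmono _ _ (aux_memX_neg (aux_memX_ind hB'))
        (aux_memX_neg (aux_memX_const 1)) (fun ω => by
          by_cases h : ω ∈ B <;> simp [h])
      simp only [conjOp]
      linarith
    · rcases hlam0.eq_or_lt with h0 | h0
      · simp [← h0]
      · have h7 : ∫ ω, (1 - X ω) ∂Qc = 0 := by
          rw [integral_sub (integrable_const _) (aux_integrable hX)]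
          simp only [integral_const, probReal_univ, smul_eq_mul, mul_one]
          have h8 := hint X hX h01
          have h9 : lam * (1 - ∫ ω, X ω ∂Qc) = 0 := by nlinarith
          exact (mul_eq_zero.1 h9).resolve_left h0.ne'
        rw [integral_eq_zero_iff_of_nonneg (fun ω => sub_nonneg.2 (h01 ω).2)
          ((integrable_const _).sub (aux_integrable hX))] at h7
        rw [integral_eq_zero_of_ae, mul_zero]
        filter_upwards [h7] with ω hω
        have : X ω = 1 := by
          simp only [Pi.zero_apply] at hω
          linarith
        simp [this]
  · intro hβ1
    rw [hβ] at hβ1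
    obtain ⟨r, ⟨B, hB, hpos, hzero, rfl⟩, hr⟩ := exists_lt_of_lt_csSup (by
      by_contra hne
      rw [Set.not_nonempty_iff_eq_empty] at hne
      rw [hne, Real.sSup_empty] at hβ1
      linarith) hβ1
    have hX : MemX (Bᶜ.indicator fun _ => (1 : ℝ)) := aux_memX_ind hB.compl
    have hX01 : ∀ ω, 0 ≤ (Bᶜ.indicator fun _ => (1 : ℝ)) ω ∧
        (Bᶜ.indicator fun _ => (1 : ℝ)) ω ≤ 1 := by
      intro ω
      by_cases h : ω ∈ B <;> simp [h]
    have heq : (Bᶜ.indicator fun _ => (1 : ℝ)) =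
        (fun _ => (1 : ℝ)) + -(B.indicator fun _ => (1 : ℝ)) := by
      funext ω
      by_cases h : ω ∈ B <;> simp [h]
    have hlt : Emu (Bᶜ.indicator fun _ => (1 : ℝ)) < α := by
      have h1 := hsub _ _ (aux_memX_const 1) (aux_memX_neg (aux_memX_ind hB))
      rw [← heq, hconst] at h1
      simp only [conjOp] at hr
      linarith
    have hval : lam * ∫ ω, (Bᶜ.indicator fun _ => (1 : ℝ)) ω ∂Qc = lam := by
      have h2 : ∫ ω, (Bᶜ.indicator fun _ => (1 : ℝ)) ω ∂Qc =
          1 - ∫ ω, (B.indicator fun _ => (1 : ℝ)) ω ∂Qc := by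
        rw [heq]
        simp only [Pi.add_apply, Pi.neg_apply, ← sub_eq_add_neg]
        rw [integral_sub (integrable_const _) (aux_integrable (aux_memX_ind hB))]
        simp
      rw [h2, mul_sub, hzero]
      ring
    have hmem : (Bᶜ.indicator fun _ => (1 : ℝ)) ∈ testSet Emu α := ⟨hX, hX01, hlt.le⟩
    refine ⟨_, hX, hX01, hlt, le_antisymm (hle _ hmem) ?_⟩
    rw [hval, hγ]
    refine csSup_le ⟨_, _, hmem, rfl⟩ ?_
    rintro _ ⟨X, ⟨hX', h01, -⟩, rfl⟩
    exact hint X hX' h01
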